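/- (Proposition 4.1.) Suppose some sequence q on the network N is aperiodic and fragmentarily asymptotically stable. Then the sequences Σ^k q, k ∈ ℕ, are pairwise distinct, each of them is aperiodic, and each of them is fragmentarily asymptotically stable; in particular, there exist infinitely many distinct aperiodic f.a.s. sequences on N. -/

import Mathlib

open MeasureTheory Filter Topology Metric Set

noncomputable section

/-- The shift operator `Σ` on sequences: `(Σ q) k = q (k+1)`. -/
def shiftSeq {A : Type*} (q : ℕ → A) : ℕ → A := fun k => q (k + 1)

/-- A sequence is preperiodic if there exist `K ≥ 1` and `K₀ ≥ 0` with
`q (k + K) = q k` for all `k > K₀`. -/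
def PreperiodicSeq {A : Type*} (q : ℕ → A) : Prop :=
  ∃ K : ℕ, 1 ≤ K ∧ ∃ K₀ : ℕ, ∀ k > K₀, q (k + K) = q k

/-- Euclidean space `ℝ^d`. -/
abbrev Es (d : ℕ) := EuclideanSpace ℝ (Fin d)

/-- The heteroclinic network as a subset of phase space:
`N = (⋃ p, {ξ p}) ∪ (⋃ j, γ j)`. -/
def netSet {d P Q : ℕ} (ξ : Fin P → Es d) (γ : Fin Q → Set (Es d)) : Set (Es d) :=
  (⋃ p, {ξ p}) ∪ ⋃ j, γ j

/-- `x` follows the sequence `q` within `UN`: there are times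
`0 ≤ t 0 < t' 0 < t 1 < t' 1 < ⋯` such that the trajectory of `x` stays in `UN`
after time `t 0`, visits the neighborhoods `U (a (q k))` and `V (q k)` at times
`t k` and `t' k`, and between `t' k` and `t' (k+1)` avoids all neighborhoods
`U p` with `p ≠ b (q k)`. -/
def FollowsSeq {d P Q : ℕ} (φ : ℝ → Es d → Es d)
    (U : Fin P → Set (Es d)) (V : Fin Q → Set (Es d))
    (a b : Fin Q → Fin P) (UN : Set (Es d)) (q : ℕ → Fin Q) (x : Es d) : Prop :=
  ∃ t t' : ℕ → ℝ,
    0 ≤ t 0 ∧ (∀ k, t k < t' k) ∧ (∀ k, t' k < t (k + 1)) ∧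
    (∀ s, t 0 < s → φ s x ∈ UN) ∧
    (∀ k, φ (t k) x ∈ U (a (q k))) ∧
    (∀ k, φ (t' k) x ∈ V (q k)) ∧
    (∀ k, ∀ s, t' k < s → s < t' (k + 1) → ∀ p, p ≠ b (q k) → φ s x ∉ U p)

/-- The `δ`-stable set `S_δ(q)` of a sequence `q`. -/
def stableSet {d P Q : ℕ} (φ : ℝ → Es d → Es d) (ξ : Fin P → Es d) (γ : Fin Q → Set (Es d))
    (U : Fin P → Set (Es d)) (V : Fin Q → Set (Es d)) (a b : Fin Q → Fin P)
    (δ : ℝ) (q : ℕ → Fin Q) : Set (Es d) :=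
  {x ∈ thickening δ (netSet ξ γ) |
    FollowsSeq φ U V a b (thickening δ (netSet ξ γ)) q x}

/-- The set `A_δ(q)` of points attracted to `N` along `q`. -/
def attrSet {d P Q : ℕ} (φ : ℝ → Es d → Es d) (ξ : Fin P → Es d) (γ : Fin Q → Set (Es d))
    (U : Fin P → Set (Es d)) (V : Fin Q → Set (Es d)) (a b : Fin Q → Fin P)
    (δ : ℝ) (q : ℕ → Fin Q) : Set (Es d) :=
  {x ∈ stableSet φ ξ γ U V a b δ q |
    Tendsto (fun t => infDist (φ t x) (netSet ξ γ)) atTop (𝓝 0)}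

/-- The asymptotic `δ`-basin of attraction `B_δ(q) = ⋃ k, A_δ(Σ^k q)`. -/
def basin {d P Q : ℕ} (φ : ℝ → Es d → Es d) (ξ : Fin P → Es d) (γ : Fin Q → Set (Es d))
    (U : Fin P → Set (Es d)) (V : Fin Q → Set (Es d)) (a b : Fin Q → Fin P)
    (δ : ℝ) (q : ℕ → Fin Q) : Set (Es d) :=
  ⋃ k : ℕ, attrSet φ ξ γ U V a b δ (shiftSeq^[k] q)

/-- The difference set `D_δ^(k)(q) = A_δ(Σ^k q) \ A_δ(Σ^(k-1) q)` (for `k ≥ 1`). -/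
def Dset {d P Q : ℕ} (φ : ℝ → Es d → Es d) (ξ : Fin P → Es d) (γ : Fin Q → Set (Es d))
    (U : Fin P → Set (Es d)) (V : Fin Q → Set (Es d)) (a b : Fin Q → Fin P)
    (δ : ℝ) (q : ℕ → Fin Q) (k : ℕ) : Set (Es d) :=
  attrSet φ ξ γ U V a b δ (shiftSeq^[k] q) \
    attrSet φ ξ γ U V a b δ (shiftSeq^[k - 1] q)

/-- Fragmentary asymptotic stability of a sequence: `μ(B_δ(q)) > 0` for every `δ > 0`. -/
def FAS {d P Q : ℕ} (φ : ℝ → Es d → Es d) (ξ : Fin P → Es d) (γ : Fin Q → Set (Es d))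
    (U : Fin P → Set (Es d)) (V : Fin Q → Set (Es d)) (a b : Fin Q → Fin P)
    (q : ℕ → Fin Q) : Prop :=
  ∀ δ : ℝ, 0 < δ → 0 < volume (basin φ ξ γ U V a b δ q)

/-! A sequence is preperiodic exactly when its orbit under `Σ` repeats a term, and the orbit of
`Σ^k q` is a tail of the orbit of `q`. A trajectory that follows `q` also follows `Σ q`: forget the
first pair of visiting times. So the sets `A_δ(Σ^k q)` increase with `k`, and the basin, being their
union, does not change when the sequence is shifted. -/

section Shift

variable {A : Type*} {q : ℕ → A}

theorem iterate_shiftSeq_apply (q : ℕ → A) (k n : ℕ) : shiftSeq^[k] q n = q (n + k) := by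
  induction k generalizing n with
  | zero => rfl
  | succ k ih => rw [Function.iterate_succ_apply', shiftSeq, ih, add_right_comm, add_assoc]

theorem preperiodicSeq_of_iterate_shiftSeq_eq {i j : ℕ} (hij : i < j)
    (h : shiftSeq^[i] q = shiftSeq^[j] q) : PreperiodicSeq q := by
  refine ⟨j - i, Nat.sub_pos_of_lt hij, i, fun n hn => ?_⟩
  have hshift : q (n - i + i) = q (n - i + j) := by
    simpa only [iterate_shiftSeq_apply] using congrFun h (n - i)
  rwa [Nat.sub_add_cancel hn.le, show n - i + j = n + (j - i) by omega, eq_comm] at hshift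

theorem PreperiodicSeq.exists_iterate_shiftSeq_eq (h : PreperiodicSeq q) :
    ∃ i j, i < j ∧ shiftSeq^[i] q = shiftSeq^[j] q := by
  obtain ⟨K, hK, K₀, hper⟩ := h
  refine ⟨K₀ + 1, K₀ + 1 + K, by omega, funext fun n => ?_⟩
  simpa only [iterate_shiftSeq_apply, add_assoc] using (hper (n + (K₀ + 1)) (by omega)).symm

theorem injective_iterate_shiftSeq_iff :
    Function.Injective (fun k : ℕ => shiftSeq^[k] q) ↔ ¬ PreperiodicSeq q := by
  constructor
  · intro hinj hper
    obtain ⟨i, j, hij, heq⟩ := hper.exists_iterate_shiftSeq_eq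
    exact hij.ne (hinj heq)
  · exact fun haper => .of_lt_imp_ne fun i j hij heq =>
      haper (preperiodicSeq_of_iterate_shiftSeq_eq hij heq)

theorem not_preperiodicSeq_iterate_shiftSeq (h : ¬ PreperiodicSeq q) (k : ℕ) :
    ¬ PreperiodicSeq (shiftSeq^[k] q) := by
  rw [← injective_iterate_shiftSeq_iff] at h ⊢
  simpa only [Function.comp_def, Function.iterate_add_apply] using h.comp (add_left_injective k)

theorem target_eq_source_iterate_shiftSeq {B : Type*} {a b : A → B}
    (hq : ∀ n, b (q n) = a (q (n + 1))) (k n : ℕ) :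
    b (shiftSeq^[k] q n) = a (shiftSeq^[k] q (n + 1)) := by
  rw [iterate_shiftSeq_apply, iterate_shiftSeq_apply, hq, add_right_comm]

end Shift

section Basin

variable {d P Q : ℕ} {φ : ℝ → Es d → Es d} {ξ : Fin P → Es d} {γ : Fin Q → Set (Es d)}
  {U : Fin P → Set (Es d)} {V : Fin Q → Set (Es d)} {a b : Fin Q → Fin P} {q : ℕ → Fin Q}

theorem FollowsSeq.shift {UN : Set (Es d)} {x : Es d} (h : FollowsSeq φ U V a b UN q x) :
    FollowsSeq φ U V a b UN (shiftSeq q) x := by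
  obtain ⟨t, t', ht₀, htt', ht't, hUN, hU, hV, havoid⟩ := h
  have ht₀₁ : t 0 < t 1 := (htt' 0).trans (ht't 0)
  exact ⟨fun k => t (k + 1), fun k => t' (k + 1), ht₀.trans ht₀₁.le, fun k => htt' (k + 1),
    fun k => ht't (k + 1), fun s hs => hUN s (ht₀₁.trans hs), fun k => hU (k + 1),
    fun k => hV (k + 1), fun k => havoid (k + 1)⟩

variable (φ ξ γ U V a b)

theorem attrSet_subset_attrSet_shiftSeq (δ : ℝ) (q : ℕ → Fin Q) :
    attrSet φ ξ γ U V a b δ q ⊆ attrSet φ ξ γ U V a b δ (shiftSeq q) :=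
  fun _ ⟨⟨hnear, hfollows⟩, hattr⟩ => ⟨⟨hnear, hfollows.shift⟩, hattr⟩

theorem monotone_attrSet_iterate_shiftSeq (δ : ℝ) (q : ℕ → Fin Q) :
    Monotone fun k : ℕ => attrSet φ ξ γ U V a b δ (shiftSeq^[k] q) :=
  monotone_nat_of_le_succ fun k => by
    rw [Function.iterate_succ_apply']
    exact attrSet_subset_attrSet_shiftSeq φ ξ γ U V a b δ _

theorem basin_iterate_shiftSeq (δ : ℝ) (q : ℕ → Fin Q) (k : ℕ) :
    basin φ ξ γ U V a b δ (shiftSeq^[k] q) = basin φ ξ γ U V a b δ q := by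
  simpa only [basin, Function.iterate_add_apply] using
    (monotone_attrSet_iterate_shiftSeq φ ξ γ U V a b δ q).iUnion_nat_add k

variable {φ ξ γ U V a b}

theorem fas_iterate_shiftSeq_iff (k : ℕ) :
    FAS φ ξ γ U V a b (shiftSeq^[k] q) ↔ FAS φ ξ γ U V a b q := by
  simp only [FAS, basin_iterate_shiftSeq]

theorem countably_many_aperiodic_fas_general (hq : ∀ k, b (q k) = a (q (k + 1)))
    (haper : ¬ PreperiodicSeq q) (hfas : FAS φ ξ γ U V a b q) :
    Function.Injective (fun k : ℕ => shiftSeq^[k] q) ∧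
    (∀ k : ℕ, ¬ PreperiodicSeq (shiftSeq^[k] q)) ∧
    (∀ k : ℕ, FAS φ ξ γ U V a b (shiftSeq^[k] q)) ∧
    {q' : ℕ → Fin Q | (∀ k, b (q' k) = a (q' (k + 1))) ∧
      ¬ PreperiodicSeq q' ∧ FAS φ ξ γ U V a b q'}.Infinite := by
  have hinj : Function.Injective (fun k : ℕ => shiftSeq^[k] q) :=
    injective_iterate_shiftSeq_iff.mpr haper
  have haper_shift := not_preperiodicSeq_iterate_shiftSeq haper
  have hfas_shift (k : ℕ) : FAS φ ξ γ U V a b (shiftSeq^[k] q) :=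
    (fas_iterate_shiftSeq_iff k).mpr hfas
  exact ⟨hinj, haper_shift, hfas_shift, infinite_of_injective_forall_mem hinj fun k =>
    ⟨target_eq_source_iterate_shiftSeq hq k, haper_shift k, hfas_shift k⟩⟩

end Basin

/-- Proposition 4.1: if `q` is aperiodic and f.a.s., then its shifts are pairwise distinct, aperiodic and f.a.s.; in particular there are infinitely many distinct aperiodic f.a.s. sequences on the network. -/
theorem countably_many_aperiodic_fas
    {d P Q : ℕ} (hd : 1 ≤ d) (hP : 1 ≤ P) (hQ : 1 ≤ Q)
    (φ : ℝ → Es d → Es d)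
    (hφcont : Continuous fun pr : ℝ × Es d => φ pr.1 pr.2)
    (hφ0 : ∀ x, φ 0 x = x)
    (hφadd : ∀ s t x, φ (s + t) x = φ s (φ t x))
    (ξ : Fin P → Es d) (hξinj : Function.Injective ξ)
    (hfix : ∀ t p, φ t (ξ p) = ξ p)
    (γ : Fin Q → Set (Es d)) (hγne : ∀ j, (γ j).Nonempty)
    (hγinv : ∀ j t x, x ∈ γ j → φ t x ∈ γ j)
    (a b : Fin Q → Fin P)
    (hω : ∀ j, ∀ x ∈ γ j, Tendsto (fun t => φ t x) atTop (𝓝 (ξ (b j))))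
    (hα : ∀ j, ∀ x ∈ γ j, Tendsto (fun t => φ t x) atBot (𝓝 (ξ (a j))))
    (ζ : Fin Q → Es d) (hζ : ∀ j, ζ j ∈ γ j)
    (U : Fin P → Set (Es d)) (hUopen : ∀ p, IsOpen (U p)) (hUmem : ∀ p, ξ p ∈ U p)
    (V : Fin Q → Set (Es d)) (hVopen : ∀ j, IsOpen (V j)) (hVmem : ∀ j, ζ j ∈ V j)
    (hUU : ∀ p p', p ≠ p' → Disjoint (closure (U p)) (closure (U p')))
    (hVV : ∀ j j', j ≠ j' → Disjoint (closure (V j)) (closure (V j')))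
    (hUV : ∀ p j, Disjoint (closure (U p)) (closure (V j)))
    (q : ℕ → Fin Q) (hq : ∀ k, b (q k) = a (q (k + 1)))
    (haper : ¬ PreperiodicSeq q) (hfas : FAS φ ξ γ U V a b q) :
    Function.Injective (fun k : ℕ => shiftSeq^[k] q) ∧
    (∀ k : ℕ, ¬ PreperiodicSeq (shiftSeq^[k] q)) ∧
    (∀ k : ℕ, FAS φ ξ γ U V a b (shiftSeq^[k] q)) ∧
    {q' : ℕ → Fin Q | (∀ k, b (q' k) = a (q' (k + 1))) ∧
      ¬ PreperiodicSeq q' ∧ FAS φ ξ γ U V a b q'}.Infinite :=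
  countably_many_aperiodic_fas_general hq haper hfas
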